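/- For every polynomial p(x) = Σ_{i=0}^{θ} a_i x^i with natural number coefficients and maximal non-null degree θ (i.e., a_θ ≠ 0), there is a closed term p̂ of the concrete syntax Λ such that ⊢ p̂ : Int ⊸ §^{θ+3}Int, and for all natural numbers n and m, p(n) = m if and only if p̂ n̄ ⇝* §^{θ+3} m̄ (the numeral m̄ enclosed in θ+3 occurrences of the § constructor). -/

import Mathlib

/-! The term is Horner's scheme, with `θ + 2` rounds on the coefficients `0, a_θ, …, a_0`, the
leading `0` being there to bring the number of `§` to exactly `θ + 3`.  Iterating the successor
of the type `X_k`, where `X_{k+1} = §X_k ⊗ !Int`, turns the argument `n̄ : Int` into a stack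
holding one duplicable copy of `n̄` at each depth, at the cost of one `§` (`polyTm`).  Each
round of the scheme (`hornerTm`) takes one copy from the stack and replaces the accumulator `r` by
`b + r * n`, obtained by iterating `add n̄` on `b̄` as many times as `r` says; this costs one
further `§`.  Typability is `typed_poly`, and `steps_poly` is the reduction to the value.

For the converse direction, reducts that are boxed numerals have to be unique.  Instead of
confluence, a graph model is used: `sem` interprets terms as sets of tokens, is invariant under
the rewriting relation (`sem_step`), ignores the modalities, and separates distinct numerals
(`mem_sem_church_self`, `eq_of_mem_sem_church`). -/

/-- Formulas of Intuitionistic Light Affine Logic (ILAL), with de Bruijn indices for the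
propositional variables: `A ::= α | A ⊸ A | A ⊗ A | !A | §A | ∀α.A`. -/
inductive Fm : Type
  | var : ℕ → Fm
  | limp : Fm → Fm → Fm
  | tens : Fm → Fm → Fm
  | bang : Fm → Fm
  | sect : Fm → Fm
  | all : Fm → Fm
deriving DecidableEq

/-- Lift the propositional variables `≥ c` by one. -/
def Fm.lift (c : ℕ) : Fm → Fm
  | .var n => if n < c then .var n else .var (n + 1)
  | .limp a b => .limp (a.lift c) (b.lift c)
  | .tens a b => .tens (a.lift c) (b.lift c)
  | .bang a => .bang (a.lift c)
  | .sect a => .sect (a.lift c)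
  | .all a => .all (a.lift (c + 1))

/-- `Fm.subst c B A` is `A[B/α_c]`. -/
def Fm.subst : ℕ → Fm → Fm → Fm
  | c, B, .var n => if n < c then .var n else if n = c then B else .var (n - 1)
  | c, B, .limp a b => .limp (Fm.subst c B a) (Fm.subst c B b)
  | c, B, .tens a b => .tens (Fm.subst c B a) (Fm.subst c B b)
  | c, B, .bang a => .bang (Fm.subst c B a)
  | c, B, .sect a => .sect (Fm.subst c B a)
  | c, B, .all a => .all (Fm.subst (c + 1) (B.lift 0) a)

/-- Patterns of the concrete syntax `Λ`: `P ::= x | P ⊗ P`. -/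
inductive Pat : Type
  | pvar : Pat
  | ptens : Pat → Pat → Pat
deriving DecidableEq

/-- Number of variables bound by a pattern. -/
def Pat.size : Pat → ℕ
  | .pvar => 1
  | .ptens p q => p.size + q.size

/-- Terms of the concrete syntax `Λ`, with de Bruijn indices (a `λ` with pattern `p`
binds `p.size` consecutive indices, the leftmost pattern variable being index `0`):
`M ::= x | λP.M | (M N) | M ⊗ N | !M | !̄M | §M | §̄M`.  De Bruijn representation makes
terms into canonical representatives of their `α`-equivalence classes. -/
inductive Tm : Type
  | bvar : ℕ → Tm
  | lam : Pat → Tm → Tm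
  | app : Tm → Tm → Tm
  | tens : Tm → Tm → Tm
  | bang : Tm → Tm
  | unbang : Tm → Tm
  | sect : Tm → Tm
  | unsect : Tm → Tm
deriving DecidableEq

/-- Lift the term variables `≥ c` by `d`. -/
def Tm.lift (c d : ℕ) : Tm → Tm
  | .bvar n => if n < c then .bvar n else .bvar (n + d)
  | .lam p t => .lam p (t.lift (c + p.size) d)
  | .app a b => .app (a.lift c d) (b.lift c d)
  | .tens a b => .tens (a.lift c d) (b.lift c d)
  | .bang a => .bang (a.lift c d)
  | .unbang a => .unbang (a.lift c d)
  | .sect a => .sect (a.lift c d)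
  | .unsect a => .unsect (a.lift c d)

/-- Capture-avoiding simultaneous substitution of the list `σ` for the term variables
`c, c+1, …, c + σ.length − 1`, decrementing the higher variables by `σ.length`. -/
def Tm.subst : ℕ → List Tm → Tm → Tm
  | c, σ, .bvar n =>
      if n < c then .bvar n
      else Tm.lift 0 c (σ.getD (n - c) (.bvar (n - c - σ.length)))
  | c, σ, .lam p t => .lam p (Tm.subst (c + p.size) σ t)
  | c, σ, .app a b => .app (Tm.subst c σ a) (Tm.subst c σ b)
  | c, σ, .tens a b => .tens (Tm.subst c σ a) (Tm.subst c σ b)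
  | c, σ, .bang a => .bang (Tm.subst c σ a)
  | c, σ, .unbang a => .unbang (Tm.subst c σ a)
  | c, σ, .sect a => .sect (Tm.subst c σ a)
  | c, σ, .unsect a => .unsect (Tm.subst c σ a)

/-- Rename the free variables of a term along `f`. -/
def Tm.rename (f : ℕ → ℕ) : Tm → Tm
  | .bvar n => .bvar (f n)
  | .lam p t => .lam p (t.rename fun n => if n < p.size then n else f (n - p.size) + p.size)
  | .app a b => .app (a.rename f) (b.rename f)
  | .tens a b => .tens (a.rename f) (b.rename f)
  | .bang a => .bang (a.rename f)
  | .unbang a => .unbang (a.rename f)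
  | .sect a => .sect (a.rename f)
  | .unsect a => .unsect (a.rename f)

/-- Matching a term against a pattern: `Pat.matchTm p N = some [M₁,…,M_m]` when `N` is a
tensor `M₁ ⊗ … ⊗ M_m` of the shape `p` (the leftmost component first). -/
def Pat.matchTm : Pat → Tm → Option (List Tm)
  | .pvar, t => some [t]
  | .ptens p q, .tens a b => do
      let l ← p.matchTm a
      let r ← q.matchTm b
      pure (l ++ r)
  | .ptens _ _, _ => none

/-- The rewriting relation `⇝` of the concrete syntax: the contextual closure of
`(λx₁⊗…⊗x_m.M)(M₁⊗…⊗M_m) ▷ M[M₁/x₁,…,M_m/x_m]`, `!̄!M ▷ M` and `§̄§M ▷ M`. -/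
inductive Step : Tm → Tm → Prop
  | beta {p : Pat} {M N : Tm} {σ : List Tm} :
      Pat.matchTm p N = some σ → Step (.app (.lam p M) N) (Tm.subst 0 σ M)
  | bangRed {M : Tm} : Step (.unbang (.bang M)) M
  | sectRed {M : Tm} : Step (.unsect (.sect M)) M
  | appL {a a' b : Tm} : Step a a' → Step (.app a b) (.app a' b)
  | appR {a b b' : Tm} : Step b b' → Step (.app a b) (.app a b')
  | lamC {p : Pat} {t t' : Tm} : Step t t' → Step (.lam p t) (.lam p t')
  | tensL {a a' b : Tm} : Step a a' → Step (.tens a b) (.tens a' b)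
  | tensR {a b b' : Tm} : Step b b' → Step (.tens a b) (.tens a b')
  | bangC {t t' : Tm} : Step t t' → Step (.bang t) (.bang t')
  | unbangC {t t' : Tm} : Step t t' → Step (.unbang t) (.unbang t')
  | sectC {t t' : Tm} : Step t t' → Step (.sect t) (.sect t')
  | unsectC {t t' : Tm} : Step t t' → Step (.unsect t) (.unsect t')

/-- `⇝*`, the reflexive and transitive closure of `⇝`. -/
def Steps : Tm → Tm → Prop := Relation.ReflTransGen Step

/-- `PatTy p A Ts`: the pattern `p` decomposes the (tensor) formula `A`, its variables
receiving, from left to right, the types in `Ts`. -/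
inductive PatTy : Pat → Fm → List Fm → Prop
  | pvar (A : Fm) : PatTy .pvar A [A]
  | ptens {p q : Pat} {A B : Fm} {Ts Us : List Fm} :
      PatTy p A Ts → PatTy q B Us → PatTy (.ptens p q) (.tens A B) (Ts ++ Us)

/-- The type assignment of ILAL, decorating the sequent calculus of Intuitionistic Light
Affine Logic with the terms of the concrete syntax `Λ`.  The context is a list of
formulas, the `i`-th entry typing the free variable `i`.  The rules are: axiom, cut (by
substitution), exchange, unconstrained weakening, contraction (identifying two variables
of type `!A`), `⊸`-left (by application) and `⊸`-right (by pattern abstraction, which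
also accounts for `⊗`-left), `⊗`-right, the `!`-rule with at most one assumption (boxing
the term with `!` and marking the assumption with `!̄`), the `§`-rule (boxing with `§`,
marking `!`-assumptions with `!̄` and `§`-assumptions with `§̄`), and `∀`-left/right with
no term constructor. -/
inductive Typed : List Fm → Tm → Fm → Prop
  | ax (A : Fm) : Typed [A] (.bvar 0) A
  | cut {Γ Δ : List Fm} {M N : Tm} {A B : Fm} :
      Typed Γ M A → Typed (A :: Δ) N B →
      Typed (Δ ++ Γ) (Tm.subst 0 [M.lift 0 Δ.length] N) B
  | exch {Γ₁ Γ₂ : List Fm} {A B C : Fm} {M : Tm} :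
      Typed (Γ₁ ++ A :: B :: Γ₂) M C →
      Typed (Γ₁ ++ B :: A :: Γ₂)
        (M.rename fun n =>
          if n = Γ₁.length then n + 1 else if n = Γ₁.length + 1 then n - 1 else n) C
  | weak {Γ : List Fm} {M : Tm} {B : Fm} (A : Fm) :
      Typed Γ M B → Typed (A :: Γ) (M.lift 0 1) B
  | contr {Γ : List Fm} {M : Tm} {A B : Fm} :
      Typed (.bang A :: .bang A :: Γ) M B →
      Typed (.bang A :: Γ) (M.rename fun n => if n ≤ 1 then 0 else n - 1) B
  | limpL {Γ Δ : List Fm} {M N : Tm} {A B C : Fm} :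
      Typed Γ M A → Typed (B :: Δ) N C →
      Typed (.limp A B :: Δ ++ Γ)
        (Tm.subst 0 [.app (.bvar 0) (M.lift 0 (Δ.length + 1))] (N.lift 1 1)) C
  | limpR {Γ : List Fm} {p : Pat} {A : Fm} {Ts : List Fm} {M : Tm} {B : Fm} :
      PatTy p A Ts → Typed (Ts ++ Γ) M B → Typed Γ (.lam p M) (.limp A B)
  | tensR {Γ Δ : List Fm} {M N : Tm} {A B : Fm} :
      Typed Γ M A → Typed Δ N B →
      Typed (Γ ++ Δ) (.tens M (N.lift 0 Γ.length)) (.tens A B)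
  | bangNil {M : Tm} {A : Fm} :
      Typed [] M A → Typed [] (.bang M) (.bang A)
  | bangOne {M : Tm} {A B : Fm} :
      Typed [B] M A →
      Typed [.bang B] (.bang (Tm.subst 0 [.unbang (.bvar 0)] M)) (.bang A)
  | sectRule {Δ Γ : List Fm} {M : Tm} {C : Fm} :
      Typed (Δ ++ Γ) M C →
      Typed (Δ.map Fm.bang ++ Γ.map Fm.sect)
        (.sect (Tm.subst 0
          (((List.range Δ.length).map fun i => .unbang (.bvar i)) ++
           ((List.range Γ.length).map fun i => .unsect (.bvar (Δ.length + i)))) M))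
        (.sect C)
  | allL {Γ : List Fm} {A B C : Fm} {M : Tm} :
      Typed (Fm.subst 0 B A :: Γ) M C → Typed (.all A :: Γ) M C
  | allR {Γ : List Fm} {M : Tm} {A : Fm} :
      Typed (Γ.map (Fm.lift 0)) M A → Typed Γ M (.all A)

/-- The type of the tally integers: `Int = ∀α.!(α⊸α)⊸§(α⊸α)`. -/
def IntF : Fm :=
  .all (.limp (.bang (.limp (.var 0) (.var 0))) (.sect (.limp (.var 0) (.var 0))))

/-- The body `!̄x(…(!̄x y)…)` with `n` occurrences of `!̄x` (here `y` is index `0` and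
`x` is index `1`). -/
def churchBody : ℕ → Tm
  | 0 => .bvar 0
  | n + 1 => .app (.unbang (.bvar 1)) (churchBody n)

/-- The tally numeral `n̄ = λx.§(λy.!̄x(…(!̄x y)…))` with `n` occurrences of `!̄x`
(in particular `0̄ = λx.§λy.y`). -/
def church (n : ℕ) : Tm := .lam .pvar (.sect (.lam .pvar (churchBody n)))

/-- `§^k A`: the formula `A` prefixed by `k` occurrences of the `§` modality. -/
def sectFm : ℕ → Fm → Fm
  | 0, A => A
  | k + 1, A => .sect (sectFm k A)

/-- `§^k M`: the term `M` enclosed in `k` occurrences of the `§` constructor. -/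
def sectTm : ℕ → Tm → Tm
  | 0, M => M
  | k + 1, M => .sect (sectTm k M)

/-! ### Iterated application and closed terms -/

/-- The term `F (F (… (F B)…))` with `n` occurrences of `F`. -/
def iterApp (F : Tm) : ℕ → Tm → Tm
  | 0, B => B
  | n + 1, B => .app F (iterApp F n B)

theorem churchBody_eq (n : ℕ) : churchBody n = iterApp (.unbang (.bvar 1)) n (.bvar 0) := by
  induction n with
  | zero => rfl
  | succ n ih => simp [churchBody, iterApp, ih]

theorem subst_iterApp (c : ℕ) (σ : List Tm) (F : Tm) (n : ℕ) (B : Tm) :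
    Tm.subst c σ (iterApp F n B) = iterApp (Tm.subst c σ F) n (Tm.subst c σ B) := by
  induction n with
  | zero => rfl
  | succ n ih => simp [iterApp, Tm.subst, ih]

theorem iterApp_add (F : Tm) (m n : ℕ) (B : Tm) :
    iterApp F m (iterApp F n B) = iterApp F (m + n) B := by
  induction m with
  | zero => simp [iterApp]
  | succ m ih => rw [Nat.add_right_comm]; simp [iterApp, ih]

/-- All free variables of the term are `< k`; `Scoped 0` means closed. -/
def Scoped : ℕ → Tm → Prop
  | k, .bvar n => n < k
  | k, .lam p t => Scoped (k + p.size) t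
  | k, .app a b => Scoped k a ∧ Scoped k b
  | k, .tens a b => Scoped k a ∧ Scoped k b
  | k, .bang a => Scoped k a
  | k, .unbang a => Scoped k a
  | k, .sect a => Scoped k a
  | k, .unsect a => Scoped k a

theorem Scoped.mono {t : Tm} : ∀ {k l : ℕ}, Scoped k t → k ≤ l → Scoped l t := by
  induction t with
  | bvar n => intro k l h hl; exact lt_of_lt_of_le h hl
  | lam p t ih => intro k l h hl; exact ih (k := k + p.size) h (by omega)
  | app a b iha ihb | tens a b iha ihb => intro k l h hl; exact ⟨iha h.1 hl, ihb h.2 hl⟩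
  | bang a ih | unbang a ih | sect a ih | unsect a ih => intro k l h hl; exact ih (k := k) h hl

theorem Scoped.lift_eq {t : Tm} : ∀ {k c : ℕ} (d : ℕ), Scoped k t → k ≤ c → t.lift c d = t := by
  induction t with
  | bvar n =>
    intro k c d h hl
    have : n < c := lt_of_lt_of_le h hl
    simp [Tm.lift, this]
  | lam p t ih =>
    intro k c d h hl
    simp only [Tm.lift]; rw [ih d h (by omega)]
  | app a b iha ihb | tens a b iha ihb =>
    intro k c d h hl; simp only [Tm.lift]; rw [iha d h.1 hl, ihb d h.2 hl]
  | bang a ih | unbang a ih | sect a ih | unsect a ih =>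
    intro k c d h hl; simp only [Tm.lift]; rw [ih (k := k) d h hl]

theorem Scoped.subst_eq {t : Tm} :
    ∀ {k c : ℕ} (σ : List Tm), Scoped k t → k ≤ c → Tm.subst c σ t = t := by
  induction t with
  | bvar n =>
    intro k c d h hl
    have : n < c := lt_of_lt_of_le h hl
    simp [Tm.subst, this]
  | lam p t ih =>
    intro k c d h hl
    simp only [Tm.subst]; rw [ih d h (by omega)]
  | app a b iha ihb | tens a b iha ihb =>
    intro k c d h hl; simp only [Tm.subst]; rw [iha d h.1 hl, ihb d h.2 hl]
  | bang a ih | unbang a ih | sect a ih | unsect a ih =>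
    intro k c d h hl; simp only [Tm.subst]; rw [ih (k := k) d h hl]

theorem Scoped.rename_eq {t : Tm} :
    ∀ {k : ℕ} {f : ℕ → ℕ}, Scoped k t → (∀ n < k, f n = n) → t.rename f = t := by
  induction t with
  | bvar n => intro k f h hf; simp [Tm.rename, hf n h]
  | lam p t ih =>
    intro k f h hf
    simp only [Tm.rename]
    rw [ih h]
    intro n hn
    split_ifs with h1
    · rfl
    · rw [hf _ (by omega)]; omega
  | app a b iha ihb | tens a b iha ihb =>
    intro k f h hf; simp only [Tm.rename]; rw [iha h.1 hf, ihb h.2 hf]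
  | bang a ih | unbang a ih | sect a ih | unsect a ih =>
    intro k f h hf; simp only [Tm.rename]; rw [ih (k := k) h hf]

theorem Scoped.lift0 {t : Tm} (h : Scoped 0 t) (c d : ℕ) : t.lift c d = t :=
  h.lift_eq d (Nat.zero_le c)

theorem Scoped.subst0 {t : Tm} (h : Scoped 0 t) (c : ℕ) (σ : List Tm) : Tm.subst c σ t = t :=
  h.subst_eq σ (Nat.zero_le c)

theorem Scoped.rename0 {t : Tm} (h : Scoped 0 t) (f : ℕ → ℕ) : t.rename f = t :=
  h.rename_eq (by simp)

theorem scoped_church (n : ℕ) : Scoped 0 (church n) := by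
  have : Scoped 2 (churchBody n) := by
    induction n with
    | zero => simp [churchBody, Scoped]
    | succ n ih => simp [churchBody, Scoped, ih]
  simpa [church, Scoped, Pat.size] using this

theorem lift_zero_right (t : Tm) : ∀ c, t.lift c 0 = t := by
  induction t with
  | bvar n => intro c; simp [Tm.lift]
  | _ => intro c; simp_all [Tm.lift]

theorem subst_lift_cancel (X t : Tm) : ∀ c, Tm.subst c [X] (t.lift c 1) = t := by
  induction t with
  | bvar n =>
    intro c
    by_cases h : n < c
    · simp [Tm.lift, Tm.subst, h]
    · have h2 : n + 1 - c = (n - c) + 1 := by omega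
      have h3 : ¬ n + 1 < c := by omega
      simp [Tm.lift, Tm.subst, h, h2, h3]
      omega
  | _ => intro c; simp_all [Tm.lift, Tm.subst]

/-! ### The terms of the encoding -/

/-- `λn.λm.λf.§(λw. §̄(m f)(§̄(n f) w))`: addition on tally integers. -/
def addTm : Tm :=
  .lam .pvar (.lam .pvar (.lam .pvar (.sect (.lam .pvar
    (.app (.unsect (.app (.bvar 2) (.bvar 1)))
      (.app (.unsect (.app (.bvar 3) (.bvar 1))) (.bvar 0)))))))

/-- A closed term reducing to the numeral `b̄`, built from `0̄` by adding `1̄` repeatedly. -/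
def constTm : ℕ → Tm
  | 0 => church 0
  | b + 1 => .app (.app addTm (church 1)) (constTm b)

/-- The type of stacks of `k` duplicable copies of an integer, one copy for each depth:
`X₀ = Int` (a dummy) and `X_{k+1} = §X_k ⊗ !Int`. -/
def stackFm : ℕ → Fm
  | 0 => IntF
  | k + 1 => .tens (.sect (stackFm k)) (.bang IntF)

/-- The stack all of whose copies are `n̄`. -/
def stackTm (n : ℕ) : ℕ → Tm
  | 0 => church 0
  | k + 1 => .tens (.sect (stackTm n k)) (.bang (church n))

/-- The successor on stacks: `λx.x`, respectively
`λ(z⊗y). §(succ_k §̄z) ⊗ !(add 1̄ !̄y)`. -/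
def stackSucc : ℕ → Tm
  | 0 => .lam .pvar (.bvar 0)
  | k + 1 => .lam (.ptens .pvar .pvar)
      (.tens (.sect (.app (stackSucc k) (.unsect (.bvar 0))))
        (.bang (.app (.app addTm (church 1)) (.unbang (.bvar 1)))))

/-- Horner's scheme: `H_{[]} = λr.λx.r` and
`H_{b::L} = λr.λ(z⊗y). §(H_L (§̄(r !(add !̄y)) b) §̄z)`.  Each round replaces the accumulator
`r` by `b + r * n`, as `r`-fold iteration of `add n̄` on `b`, where `n` is the integer in the
stack; the round costs one `§`. -/
def hornerTm : List ℕ → Tm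
  | [] => .lam .pvar (.lam .pvar (.bvar 1))
  | b :: L => .lam .pvar (.lam (.ptens .pvar .pvar) (.sect
      (.app (.app (hornerTm L)
        (.app (.unsect (.app (.bvar 2) (.bang (.app addTm (.unbang (.bvar 1)))))) (constTm b)))
        (.unsect (.bvar 0)))))

/-- `λn. §(H_L 0̄ (§̄(n !succ_k) zero_k))` with `k` the length of `L`: the integer `n` is
turned into a stack by iteration, and Horner's scheme is run on it. -/
def polyTm (L : List ℕ) : Tm :=
  .lam .pvar (.sect (.app (.app (hornerTm L) (church 0))
    (.app (.unsect (.app (.bvar 0) (.bang (stackSucc L.length)))) (stackTm 0 L.length))))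

theorem scoped_add : Scoped 0 addTm := by simp [addTm, Scoped, Pat.size]

theorem scoped_const (b : ℕ) : Scoped 0 (constTm b) := by
  induction b with
  | zero => exact scoped_church 0
  | succ b ih => exact ⟨⟨scoped_add, scoped_church 1⟩, ih⟩

theorem scoped_stack (n k : ℕ) : Scoped 0 (stackTm n k) := by
  induction k with
  | zero => exact scoped_church 0
  | succ k ih => exact ⟨ih, scoped_church n⟩

theorem scoped_stackSucc (k : ℕ) : Scoped 0 (stackSucc k) := by
  induction k with
  | zero => simp [stackSucc, Scoped, Pat.size]
  | succ k ih =>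
    simp [stackSucc, Scoped, Pat.size, ih.mono, scoped_add.mono, (scoped_church 1).mono]

theorem scoped_horner (L : List ℕ) : Scoped 0 (hornerTm L) := by
  induction L with
  | nil => simp [hornerTm, Scoped, Pat.size]
  | cons b L ih =>
    simp [hornerTm, Scoped, Pat.size, ih.mono, scoped_add.mono, (scoped_const b).mono]

/-! ### Typing -/

theorem Typed.of_eq {Γ : List Fm} {M N : Tm} {A : Fm} (h : Typed Γ M A) (e : M = N) :
    Typed Γ N A := e ▸ h

/-- Application, derived from cut and the left rule for `⊸`. -/
theorem Typed.appI {Γ Δ : List Fm} {M N : Tm} {A B : Fm}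
    (hM : Typed Γ M (.limp A B)) (hN : Typed Δ N A) :
    Typed (Δ ++ Γ) (.app (M.lift 0 Δ.length) N) B := by
  have h1 := Typed.limpL hN (Typed.ax B)
  have h2 := Typed.cut hM h1
  refine Typed.of_eq h2 ?_
  simp [Tm.subst, Tm.lift, lift_zero_right, subst_lift_cancel]

/-- Application of a closed term. -/
theorem Typed.appC {Δ : List Fm} {M N : Tm} {A B : Fm} (hs : Scoped 0 M)
    (hM : Typed [] M (.limp A B)) (hN : Typed Δ N A) : Typed Δ (.app M N) B := by
  have := Typed.appI hM hN
  rwa [hs.lift0, List.append_nil] at this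

/-- Elimination of `∀`, derived from cut and the left rule. -/
theorem Typed.allE {Γ : List Fm} {M : Tm} {A : Fm} (B : Fm) (hM : Typed Γ M (.all A)) :
    Typed Γ M (Fm.subst 0 B A) := by
  have h2 := Typed.cut hM (Typed.allL (B := B) (Typed.ax (Fm.subst 0 B A)))
  refine Typed.of_eq h2 ?_
  simp [Tm.subst, lift_zero_right]

/-- A tally integer used as an iterator over the type `A`. -/
theorem Typed.intE {Γ : List Fm} {M : Tm} (A : Fm) (hM : Typed Γ M IntF) :
    Typed Γ M (.limp (.bang (.limp A A)) (.sect (.limp A A))) := by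
  simpa [Fm.subst] using Typed.allE A hM

theorem Typed.lamV {Γ : List Fm} {M : Tm} {A B : Fm} (h : Typed (A :: Γ) M B) :
    Typed Γ (.lam .pvar M) (.limp A B) := Typed.limpR (.pvar A) h

theorem typed_church_zero : Typed [] (church 0) IntF := by
  refine .allR (.lamV ?_)
  have h := Typed.sectRule (Δ := []) (Γ := []) (Typed.lamV (Typed.ax (.var 0)))
  exact Typed.weak _ h

theorem typed_church_one : Typed [] (church 1) IntF := by
  refine .allR (.lamV ?_)
  have h1 : Typed [.limp (.var 0) (.var 0)] (.lam .pvar (.app (.bvar 1) (.bvar 0)))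
      (.limp (.var 0) (.var 0)) :=
    Typed.lamV (Typed.appI (Typed.ax (.limp (.var 0) (.var 0))) (Typed.ax (.var 0)))
  exact Typed.sectRule (Δ := [.limp (.var 0) (.var 0)]) (Γ := []) h1

theorem typed_add : Typed [] addTm (.limp IntF (.limp IntF IntF)) := by
  refine .lamV (.lamV (.allR (.lamV ?_)))
  set E : Fm := .limp (.var 0) (.var 0) with hE
  -- `f : !(α⊸α), m : Int ⊢ m f : §(α⊸α)`
  have happ : Typed [.bang E, IntF] (.app (.bvar 1) (.bvar 0)) (.sect E) :=
    Typed.appI (Typed.intE (.var 0) (Typed.ax IntF)) (Typed.ax (.bang E))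
  have h1 : Typed [E, E] (.lam .pvar (.app (.bvar 1) (.app (.bvar 2) (.bvar 0)))) E := by
    refine .lamV ?_
    have := Typed.appI (Typed.ax E) (Typed.appI (Typed.ax E) (Typed.ax (.var 0)))
    have h2 : Typed ([.var 0] ++ E :: E :: []) _ _ := this
    exact Typed.exch h2
  have h2 := Typed.sectRule (Δ := []) (Γ := [E, E]) h1
  have h3 := Typed.cut happ h2
  have h4 := Typed.cut happ h3
  have h5 : Typed ([.bang E] ++ .bang E :: IntF :: [IntF]) _ _ :=
    Typed.exch (Γ₁ := [.bang E]) (Γ₂ := [IntF]) h4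
  exact Typed.contr h5

theorem typed_const (b : ℕ) : Typed [] (constTm b) IntF := by
  induction b with
  | zero => exact typed_church_zero
  | succ b ih =>
    exact .appC ⟨scoped_add, scoped_church 1⟩ (.appC scoped_add typed_add typed_church_one) ih

theorem typed_stack_zero (k : ℕ) : Typed [] (stackTm 0 k) (stackFm k) := by
  induction k with
  | zero => exact typed_church_zero
  | succ k ih =>
    have h1 := Typed.sectRule (Δ := []) (Γ := []) ih
    refine Typed.of_eq (Typed.tensR h1 (Typed.bangNil typed_church_zero)) ?_
    simp [stackTm, (scoped_stack 0 k).subst0, Tm.lift, (scoped_church 0).lift0]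

theorem typed_stackSucc (k : ℕ) : Typed [] (stackSucc k) (.limp (stackFm k) (stackFm k)) := by
  induction k with
  | zero => exact .lamV (.ax _)
  | succ k ih =>
    have h1 := Typed.sectRule (Δ := []) (Γ := [stackFm k])
      (Typed.appC (scoped_stackSucc k) ih (Typed.ax (stackFm k)))
    have h2 := Typed.bangOne (Typed.appC (M := .app addTm (church 1)) ⟨scoped_add, scoped_church 1⟩
      (.appC scoped_add typed_add typed_church_one) (Typed.ax IntF))
    have h3 := Typed.tensR h1 h2
    refine Typed.limpR (.ptens (.pvar _) (.pvar _)) (Typed.of_eq h3 ?_)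
    simp [Tm.subst, (scoped_stackSucc k).subst0, Tm.lift, (scoped_church 1).lift0,
      (scoped_church 1).subst0, scoped_add.lift0, scoped_add.subst0]

theorem typed_horner (L : List ℕ) : Typed [] (hornerTm L)
    (.limp IntF (.limp (stackFm L.length) (sectFm L.length IntF))) := by
  induction L with
  | nil => exact .lamV (.lamV (.weak _ (.ax IntF)))
  | cons b L ih =>
    set X := stackFm L.length
    set F : Fm := .limp IntF IntF
    -- `z : X_k, g : Int⊸Int ⊢ H_L (g b) z`
    have h1 := Typed.appI (Typed.appC (scoped_horner L) ih
      (Typed.appI (Typed.ax F) (typed_const b))) (Typed.ax X)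
    have h2 := Typed.sectRule (Δ := []) (Γ := [X, F]) h1
    have h3 := Typed.exch (Γ₁ := []) (Γ₂ := []) h2
    have hb := Typed.bangOne (Typed.appC scoped_add typed_add (Typed.ax IntF))
    have hi := Typed.appI (Typed.intE IntF (Typed.ax IntF)) hb
    have h4 := Typed.cut hi h3
    refine .lamV (Typed.limpR (.ptens (.pvar _) (.pvar _)) (Typed.of_eq h4 ?_))
    simp [Tm.subst, Tm.lift, Tm.rename, (scoped_horner L).subst0, (scoped_horner L).lift0,
      (scoped_horner L).rename0, (scoped_const b).lift0, (scoped_const b).subst0,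
      (scoped_const b).rename0, scoped_add.lift0, scoped_add.subst0]

theorem typed_poly (L : List ℕ) :
    Typed [] (polyTm L) (.limp IntF (.sect (sectFm L.length IntF))) := by
  set X := stackFm L.length
  have h1 := Typed.appC (M := .app (hornerTm L) (church 0)) ⟨scoped_horner L, scoped_church 0⟩
    (Typed.appC (scoped_horner L) (typed_horner L) typed_church_zero)
    (Typed.appI (Typed.ax (.limp X X)) (typed_stack_zero L.length))
  have h2 := Typed.sectRule (Δ := []) (Γ := [.limp X X]) h1
  have hi := Typed.appI (Typed.intE X (Typed.ax IntF)) (Typed.bangNil (typed_stackSucc L.length))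
  have h4 := Typed.cut hi h2
  refine .lamV (Typed.of_eq h4 ?_)
  simp [Tm.subst, Tm.lift, (scoped_horner L).subst0, (scoped_church 0).subst0,
    (scoped_stack 0 L.length).subst0, (scoped_stackSucc L.length).lift0]

/-! ### Reductions -/

theorem Steps.app {a a' b b' : Tm} (h : Steps a a') (h' : Steps b b') :
    Steps (.app a b) (.app a' b') :=
  (Relation.ReflTransGen.lift (Tm.app · b) (fun _ _ => Step.appL) _ _ h).trans
    (Relation.ReflTransGen.lift (Tm.app a' ·) (fun _ _ => Step.appR) _ _ h')

theorem Steps.tens {a a' b b' : Tm} (h : Steps a a') (h' : Steps b b') :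
    Steps (.tens a b) (.tens a' b') :=
  (Relation.ReflTransGen.lift (Tm.tens · b) (fun _ _ => Step.tensL) _ _ h).trans
    (Relation.ReflTransGen.lift (Tm.tens a' ·) (fun _ _ => Step.tensR) _ _ h')

theorem Steps.lam {p : Pat} {a a' : Tm} (h : Steps a a') : Steps (.lam p a) (.lam p a') :=
  Relation.ReflTransGen.lift (Tm.lam p) (fun _ _ => Step.lamC) _ _ h

theorem Steps.bang {a a' : Tm} (h : Steps a a') : Steps (.bang a) (.bang a') :=
  Relation.ReflTransGen.lift Tm.bang (fun _ _ => Step.bangC) _ _ h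

theorem Steps.sect {a a' : Tm} (h : Steps a a') : Steps (.sect a) (.sect a') :=
  Relation.ReflTransGen.lift Tm.sect (fun _ _ => Step.sectC) _ _ h

theorem Steps.unsect {a a' : Tm} (h : Steps a a') : Steps (.unsect a) (.unsect a') :=
  Relation.ReflTransGen.lift Tm.unsect (fun _ _ => Step.unsectC) _ _ h

theorem Steps.refl (a : Tm) : Steps a a := Relation.ReflTransGen.refl

theorem Steps.trans {a b c : Tm} (h : Steps a b) (h' : Steps b c) : Steps a c :=
  Relation.ReflTransGen.trans h h'

theorem Step.steps {a b : Tm} (h : Step a b) : Steps a b := Relation.ReflTransGen.single h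

theorem steps_beta {p : Pat} {M N R : Tm} {σ : List Tm} (h : Pat.matchTm p N = some σ)
    (e : Tm.subst 0 σ M = R) : Steps (.app (.lam p M) N) R := e ▸ (Step.beta h).steps

theorem steps_beta_var {M N R : Tm} (e : Tm.subst 0 [N] M = R) :
    Steps (.app (.lam .pvar M) N) R := steps_beta rfl e

/-- Using a numeral as an iterator: `§̄(n̄ F) B ⇝* !̄F(…(!̄F B)…)`. -/
theorem steps_church_app (n : ℕ) (F B : Tm) :
    Steps (.app (.unsect (.app (church n) F)) B) (iterApp (.unbang F) n B) := by
  have h1 : Steps (.app (church n) F)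
      (.sect (.lam .pvar (iterApp (.unbang (F.lift 0 1)) n (.bvar 0)))) :=
    steps_beta_var (by simp [Tm.subst, churchBody_eq, subst_iterApp, Pat.size])
  refine ((h1.unsect.trans Step.sectRed.steps).app (.refl B)).trans (steps_beta_var ?_)
  simp [subst_iterApp, Tm.subst, subst_lift_cancel, lift_zero_right]

/-- Iterating a function that maps `g i` to `g (i+1)`. -/
theorem steps_iterate (F : Tm) (g : ℕ → Tm) (h : ∀ i, Steps (.app F (g i)) (g (i + 1)))
    (n : ℕ) : Steps (.app (.unsect (.app (church n) (.bang F))) (g 0)) (g n) := by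
  refine (steps_church_app n _ _).trans ?_
  induction n with
  | zero => exact .refl _
  | succ n ih => exact (Steps.app Step.bangRed.steps ih).trans (h n)

theorem steps_add (n m : ℕ) : Steps (.app (.app addTm (church n)) (church m)) (church (n + m)) := by
  have h1 : Steps (.app (.app addTm (church n)) (church m))
      (.lam .pvar (.sect (.lam .pvar
        (.app (.unsect (.app (church m) (.bvar 1)))
          (.app (.unsect (.app (church n) (.bvar 1))) (.bvar 0)))))) := by
    refine (Steps.app (steps_beta_var rfl) (.refl _)).trans (steps_beta_var ?_)
    simp [Tm.subst, Pat.size, (scoped_church _).lift0, (scoped_church _).subst0]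
  refine h1.trans (Steps.lam (Steps.sect (Steps.lam ?_)))
  refine (Steps.app (.refl _) (steps_church_app n _ _)).trans ?_
  rw [churchBody_eq, Nat.add_comm n m, ← iterApp_add]
  exact steps_church_app m _ _

theorem steps_const (b : ℕ) : Steps (constTm b) (church b) := by
  induction b with
  | zero => exact .refl _
  | succ b ih =>
    have := steps_add 1 b
    rw [Nat.add_comm 1 b] at this
    exact (Steps.app (.refl _) ih).trans this

theorem steps_stackSucc (k n : ℕ) :
    Steps (.app (stackSucc k) (stackTm n k)) (stackTm (n + 1) k) := by
  induction k with
  | zero => exact steps_beta_var (by simp [Tm.subst, stackTm, lift_zero_right])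
  | succ k ih =>
    have h1 : Steps (.app (stackSucc (k + 1)) (stackTm n (k + 1)))
        (.tens (.sect (.app (stackSucc k) (.unsect (.sect (stackTm n k)))))
        (.bang (.app (.app addTm (church 1)) (.unbang (.bang (church n)))))) := by
      refine steps_beta (σ := [.sect (stackTm n k), .bang (church n)]) rfl ?_
      simp [Tm.subst, lift_zero_right, (scoped_stackSucc k).subst0, scoped_add.subst0,
        (scoped_church 1).subst0]
    refine h1.trans (Steps.tens (Steps.sect ?_) (Steps.bang ?_))
    · exact (Steps.app (.refl _) Step.sectRed.steps).trans ih
    · rw [Nat.add_comm n 1]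
      exact (Steps.app (.refl _) Step.bangRed.steps).trans (steps_add 1 n)

theorem steps_horner (n : ℕ) (L : List ℕ) : ∀ r : ℕ,
    Steps (.app (.app (hornerTm L) (church r)) (stackTm n L.length))
      (sectTm L.length (church (L.foldl (fun r b => b + r * n) r))) := by
  induction L with
  | nil =>
    intro r
    refine (Steps.app (steps_beta_var rfl) (.refl _)).trans (steps_beta_var ?_)
    simp [Tm.subst, Pat.size, (scoped_church r).lift0, (scoped_church r).subst0, sectTm]
  | cons b L ih =>
    intro r
    have h1 : Steps (.app (.app (hornerTm (b :: L)) (church r)) (stackTm n (L.length + 1)))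
        (.sect (.app (.app (hornerTm L)
          (.app (.unsect (.app (church r) (.bang (.app addTm (.unbang (.bang (church n)))))))
            (constTm b)))
          (.unsect (.sect (stackTm n L.length))))) := by
      refine (Steps.app (steps_beta_var rfl) (.refl _)).trans
        (steps_beta (σ := [.sect (stackTm n L.length), .bang (church n)]) rfl ?_)
      simp [Tm.subst, Pat.size, lift_zero_right, (scoped_church _).lift0,
        (scoped_church _).subst0, scoped_add.subst0, (scoped_const b).subst0,
        (scoped_horner L).subst0]
    have h2 : Steps (.app (.unsect (.app (church r)
        (.bang (.app addTm (.unbang (.bang (church n))))))) (constTm b))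
        (church (b + r * n)) := by
      refine (Steps.app (Steps.unsect (Steps.app (.refl _)
        (Steps.bang (Steps.app (.refl _) Step.bangRed.steps)))) (steps_const b)).trans ?_
      have := steps_iterate (.app addTm (church n)) (fun i => church (b + i * n)) (fun i => by
        have := steps_add n (b + i * n)
        rwa [show n + (b + i * n) = b + (i + 1) * n by ring] at this) r
      simpa using this
    refine h1.trans (Steps.sect ?_)
    exact (Steps.app (Steps.app (.refl _) h2) Step.sectRed.steps).trans (ih (b + r * n))

theorem steps_poly (L : List ℕ) (n : ℕ) :
    Steps (.app (polyTm L) (church n))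
      (sectTm (L.length + 1) (church (L.foldl (fun r b => b + r * n) 0))) := by
  have h1 : Steps (.app (polyTm L) (church n))
      (.sect (.app (.app (hornerTm L) (church 0))
        (.app (.unsect (.app (church n) (.bang (stackSucc L.length)))) (stackTm 0 L.length)))) := by
    refine steps_beta_var ?_
    simp [Tm.subst, lift_zero_right, (scoped_horner L).subst0, (scoped_church _).subst0,
      (scoped_stackSucc _).subst0, (scoped_stack _ _).subst0]
  refine h1.trans (Steps.sect ?_)
  have h2 := steps_iterate (stackSucc L.length) (fun i => stackTm i L.length)
    (fun i => steps_stackSucc L.length i) n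
  exact (Steps.app (.refl _) h2).trans (steps_horner n L 0)

/-! ### A graph model separating the numerals -/

/-- Tokens of the graph model: atoms, step functions from a finite set of tokens (given as a
list) to a token, and tokens of the left and right component of a pair. -/
inductive Tok : Type
  | atom : ℕ → Tok
  | arr : List Tok → Tok → Tok
  | inl : Tok → Tok
  | inr : Tok → Tok

/-- The components of a point of the model according to a pattern. -/
def Pat.comps : Pat → Set Tok → List (Set Tok)
  | .pvar, X => [X]
  | .ptens p q, X => p.comps {d | .inl d ∈ X} ++ q.comps {d | .inr d ∈ X}

theorem Pat.length_comps (p : Pat) : ∀ X, (p.comps X).length = p.size := by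
  induction p with
  | pvar => intro X; rfl
  | ptens p q ihp ihq => intro X; simp [Pat.comps, Pat.size, ihp, ihq]

/-- Extension of an environment by values for the first de Bruijn indices. -/
def extendEnv (l : List (Set Tok)) (ρ : ℕ → Set Tok) (n : ℕ) : Set Tok :=
  l.getD n (ρ (n - l.length))

theorem extendEnv_lt {l : List (Set Tok)} {ρ ρ' : ℕ → Set Tok} {n : ℕ} (h : n < l.length) :
    extendEnv l ρ n = extendEnv l ρ' n := by
  simp [extendEnv, h]

theorem extendEnv_ge {l : List (Set Tok)} {ρ : ℕ → Set Tok} {n : ℕ} (h : l.length ≤ n) :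
    extendEnv l ρ n = ρ (n - l.length) := by
  simp [extendEnv, h]

/-- Interpretation of terms as sets of tokens; both modalities are transparent. -/
def sem : Tm → (ℕ → Set Tok) → Set Tok
  | .bvar n, ρ => ρ n
  | .lam p t, ρ =>
      {e | ∃ l d, e = .arr l d ∧ d ∈ sem t (extendEnv (p.comps {x | x ∈ l}) ρ)}
  | .app a b, ρ => {d | ∃ l, .arr l d ∈ sem a ρ ∧ ∀ x ∈ l, x ∈ sem b ρ}
  | .tens a b, ρ => {e | (∃ d ∈ sem a ρ, e = .inl d) ∨ (∃ d ∈ sem b ρ, e = .inr d)}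
  | .bang a, ρ => sem a ρ
  | .unbang a, ρ => sem a ρ
  | .sect a, ρ => sem a ρ
  | .unsect a, ρ => sem a ρ

/-- Scott continuity for maps between power sets: membership in `F X` is witnessed by a finite
subset of `X`. -/
def FinCont (F : Set Tok → Set Tok) : Prop :=
  ∀ X d, d ∈ F X ↔ ∃ l : List Tok, (∀ x ∈ l, x ∈ X) ∧ d ∈ F {x | x ∈ l}

theorem FinCont.mono {F : Set Tok → Set Tok} (h : FinCont F) {X Y : Set Tok} (hXY : X ⊆ Y) :
    F X ⊆ F Y := by
  intro d hd
  obtain ⟨l, hl, hd⟩ := (h X d).1 hd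
  exact (h Y d).2 ⟨l, fun x hx => hXY (hl x hx), hd⟩

theorem FinCont.const (Y : Set Tok) : FinCont fun _ => Y :=
  fun _ _ => ⟨fun h => ⟨[], by simp, h⟩, fun ⟨_, _, h⟩ => h⟩

theorem FinCont.id : FinCont fun X => X :=
  fun _ d => ⟨fun h => ⟨[d], by simpa using h, by simp⟩, fun ⟨_, hl, h⟩ => hl d h⟩

theorem FinCont.preimage {F : Set Tok → Set Tok} (h : FinCont F) (f : Tok → Tok) :
    FinCont fun X => {d | f d ∈ F X} := fun X d => h X (f d)

theorem FinCont.list {F : Set Tok → Set Tok} (h : FinCont F) {X : Set Tok} (l : List Tok)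
    (hl : ∀ x ∈ l, x ∈ F X) :
    ∃ l' : List Tok, (∀ x ∈ l', x ∈ X) ∧ ∀ x ∈ l, x ∈ F {x | x ∈ l'} := by
  induction l with
  | nil => exact ⟨[], by simp, by simp⟩
  | cons a l ih =>
    obtain ⟨l₁, h₁, h₂⟩ := ih fun x hx => hl x (List.mem_cons_of_mem _ hx)
    obtain ⟨l₂, h₃, h₄⟩ := (h X a).1 (hl a List.mem_cons_self)
    refine ⟨l₁ ++ l₂, ?_, ?_⟩
    · intro x hx
      rcases List.mem_append.1 hx with hx | hx
      exacts [h₁ x hx, h₃ x hx]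
    · intro x hx
      rcases List.mem_cons.1 hx with rfl | hx
      · exact h.mono (fun y hy => List.mem_append_right _ hy) h₄
      · exact h.mono (fun y hy => List.mem_append_left _ hy) (h₂ x hx)

theorem finCont_comps (p : Pat) : ∀ {F : Set Tok → Set Tok}, FinCont F → ∀ (n : ℕ) (Y : Set Tok),
    FinCont fun X => (p.comps (F X)).getD n Y := by
  induction p with
  | pvar =>
    intro F h n Y
    cases n with
    | zero => simpa [Pat.comps] using h
    | succ n => simpa [Pat.comps] using FinCont.const Y
  | ptens p q ihp ihq =>
    intro F h n Y
    by_cases hn : n < p.size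
    · have : (fun X => ((Pat.ptens p q).comps (F X)).getD n Y) =
          fun X => (p.comps {d | .inl d ∈ F X}).getD n Y := by
        funext X
        rw [Pat.comps, List.getD_append _ _ _ _ (by rwa [Pat.length_comps])]
      rw [this]
      exact ihp (h.preimage _) n Y
    · have : (fun X => ((Pat.ptens p q).comps (F X)).getD n Y) =
          fun X => (q.comps {d | .inr d ∈ F X}).getD (n - p.size) Y := by
        funext X
        rw [Pat.comps, List.getD_append_right _ _ _ _ (by rw [Pat.length_comps]; omega),
          Pat.length_comps]
      rw [this]
      exact ihq (h.preimage _) _ Y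

theorem finCont_sem (t : Tm) : ∀ {G : Set Tok → ℕ → Set Tok}, (∀ n, FinCont fun X => G X n) →
    FinCont fun X => sem t (G X) := by
  induction t with
  | bvar n => intro G h; exact h n
  | lam p t ih =>
    intro G h X e
    have key (l : List Tok) : FinCont fun X =>
        sem t (extendEnv (p.comps {x | x ∈ l}) (G X)) := by
      refine ih fun n => ?_
      by_cases hn : n < p.size
      · have : (fun X => extendEnv (p.comps {x | x ∈ l}) (G X) n) =
            fun _ => extendEnv (p.comps {x | x ∈ l}) (G ∅) n := by
          funext X; exact extendEnv_lt (by rwa [Pat.length_comps])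
        rw [this]; exact .const _
      · have : (fun X => extendEnv (p.comps {x | x ∈ l}) (G X) n) =
            fun X => G X (n - p.size) := by
          funext X; rw [extendEnv_ge (by rw [Pat.length_comps]; omega), Pat.length_comps]
        rw [this]; exact h _
    constructor
    · rintro ⟨l, d, rfl, hd⟩
      obtain ⟨l', h1, h2⟩ := (key l X d).1 hd
      exact ⟨l', h1, l, d, rfl, h2⟩
    · rintro ⟨l', h1, l, d, rfl, hd⟩
      exact ⟨l, d, rfl, (key l X d).2 ⟨l', h1, hd⟩⟩
  | app a b iha ihb =>
    intro G h X d
    have ha := iha h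
    have hb := ihb h
    constructor
    · rintro ⟨l, h1, h2⟩
      obtain ⟨l₁, h3, h4⟩ := (ha X _).1 h1
      obtain ⟨l₂, h5, h6⟩ := hb.list l h2
      refine ⟨l₁ ++ l₂, ?_, l, ?_, ?_⟩
      · intro x hx
        rcases List.mem_append.1 hx with hx | hx
        exacts [h3 x hx, h5 x hx]
      · exact ha.mono (fun y hy => List.mem_append_left _ hy) h4
      · intro x hx
        exact hb.mono (fun y hy => List.mem_append_right _ hy) (h6 x hx)
    · rintro ⟨l', h1, l, h2, h3⟩
      exact ⟨l, ha.mono h1 h2, fun x hx => hb.mono h1 (h3 x hx)⟩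
  | tens a b iha ihb =>
    intro G h X e
    have ha := iha h
    have hb := ihb h
    constructor
    · rintro (⟨d, hd, rfl⟩ | ⟨d, hd, rfl⟩)
      · obtain ⟨l, h1, h2⟩ := (ha X _).1 hd
        exact ⟨l, h1, .inl ⟨d, h2, rfl⟩⟩
      · obtain ⟨l, h1, h2⟩ := (hb X _).1 hd
        exact ⟨l, h1, .inr ⟨d, h2, rfl⟩⟩
    · rintro ⟨l, h1, (⟨d, hd, rfl⟩ | ⟨d, hd, rfl⟩)⟩
      · exact .inl ⟨d, ha.mono h1 hd, rfl⟩
      · exact .inr ⟨d, hb.mono h1 hd, rfl⟩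
  | bang a ih | unbang a ih | sect a ih | unsect a ih => intro G h; exact ih h

theorem sem_lift (t : Tm) : ∀ (c d : ℕ) (ρ : ℕ → Set Tok),
    sem (t.lift c d) ρ = sem t (fun n => if n < c then ρ n else ρ (n + d)) := by
  induction t with
  | bvar n => intro c d ρ; simp only [Tm.lift]; split_ifs with h <;> simp [sem, h]
  | lam p t ih =>
    intro c d ρ
    have key (l : List Tok) :
        (fun n => if n < c + p.size then extendEnv (p.comps {x | x ∈ l}) ρ n
          else extendEnv (p.comps {x | x ∈ l}) ρ (n + d)) =
        extendEnv (p.comps {x | x ∈ l}) (fun n => if n < c then ρ n else ρ (n + d)) := by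
      funext n
      have hl := p.length_comps {x | x ∈ l}
      by_cases hn : n < p.size
      · rw [if_pos (by omega)]
        exact extendEnv_lt (by omega)
      · rw [extendEnv_ge (by omega), extendEnv_ge (by omega), extendEnv_ge (by omega), hl]
        have : n + d - p.size = n - p.size + d := by omega
        rw [this]
        split_ifs <;> first | rfl | omega
    simp only [Tm.lift, sem, ih, key]
  | app a b iha ihb | tens a b iha ihb => intro c d ρ; simp only [Tm.lift, sem, iha, ihb]
  | bang a ih | unbang a ih | sect a ih | unsect a ih =>
    intro c d ρ; simp only [Tm.lift, sem, ih]

theorem sem_subst (t : Tm) : ∀ (c : ℕ) (σ : List Tm) (ρ : ℕ → Set Tok),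
    sem (Tm.subst c σ t) ρ = sem t (fun n => if n < c then ρ n
      else (σ.map fun s => sem s fun k => ρ (k + c)).getD (n - c) (ρ (n - σ.length))) := by
  induction t with
  | bvar n =>
    intro c σ ρ
    simp only [Tm.subst]
    split_ifs with h
    · simp [sem, h]
    · rw [sem_lift]
      by_cases h2 : n - c < σ.length
      · simp [sem, h, h2]
      · simp only [not_lt] at h2
        have : n - c - σ.length + c = n - σ.length := by omega
        simp [sem, h, h2, this]
  | lam p t ih =>
    intro c σ ρ
    have key (l : List Tok) :
        (fun n => if n < c + p.size then extendEnv (p.comps {x | x ∈ l}) ρ n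
          else (σ.map fun s => sem s fun k =>
            extendEnv (p.comps {x | x ∈ l}) ρ (k + (c + p.size))).getD (n - (c + p.size))
              (extendEnv (p.comps {x | x ∈ l}) ρ (n - σ.length))) =
        extendEnv (p.comps {x | x ∈ l}) (fun n => if n < c then ρ n
          else (σ.map fun s => sem s fun k => ρ (k + c)).getD (n - c) (ρ (n - σ.length))) := by
      funext n
      have hl := p.length_comps {x | x ∈ l}
      have h0 : (fun k => extendEnv (p.comps {x | x ∈ l}) ρ (k + (c + p.size))) =
          fun k => ρ (k + c) := by
        funext k
        rw [extendEnv_ge (by omega), hl]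
        congr 1
        omega
      rw [h0]
      by_cases hn : n < p.size
      · rw [if_pos (by omega)]
        exact extendEnv_lt (by omega)
      · rw [extendEnv_ge (n := n) (by omega), extendEnv_ge (n := n) (by omega), hl]
        have h1 : n - p.size - c = n - (c + p.size) := by omega
        rw [h1]
        by_cases h2 : n < c + p.size
        · rw [if_pos h2, if_pos (by omega)]
        · rw [if_neg h2, if_neg (by omega)]
          by_cases h3 : n - (c + p.size) < σ.length
          · simp [h3]
          · rw [extendEnv_ge (by omega), hl]
            have : n - σ.length - p.size = n - p.size - σ.length := by omega
            rw [this]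
    simp only [Tm.subst, sem, ih, key]
  | app a b iha ihb | tens a b iha ihb => intro c d ρ; simp only [Tm.subst, sem, iha, ihb]
  | bang a ih | unbang a ih | sect a ih | unsect a ih =>
    intro c d ρ; simp only [Tm.subst, sem, ih]

theorem sem_matchTm (ρ : ℕ → Set Tok) (p : Pat) : ∀ {N : Tm} {σ : List Tm},
    Pat.matchTm p N = some σ → (σ.map fun s => sem s ρ) = p.comps (sem N ρ) := by
  induction p with
  | pvar => intro N σ h; simp only [Pat.matchTm, Option.some.injEq] at h; subst h; simp [Pat.comps]
  | ptens p q ihp ihq =>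
    intro N σ h
    cases N with
    | tens a b =>
      simp only [Pat.matchTm, Option.bind_eq_bind, Option.bind_eq_some_iff] at h
      obtain ⟨l, hl, r, hr, h⟩ := h
      simp only [Option.pure_def, Option.some.injEq] at h
      subst h
      simp [Pat.comps, sem, ihp hl, ihq hr]
    | _ => simp [Pat.matchTm] at h

/-- Soundness of the graph model for the rewriting relation. -/
theorem sem_step {M N : Tm} (h : Step M N) : ∀ ρ, sem M ρ = sem N ρ := by
  induction h with
  | @beta p M N σ h =>
    intro ρ
    have henv : sem (Tm.subst 0 σ M) ρ = sem M (extendEnv (p.comps (sem N ρ)) ρ) := by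
      rw [sem_subst, ← sem_matchTm ρ p h]
      congr 1
      funext n
      simp [extendEnv]
    rw [henv]
    have hc : FinCont fun X => sem M (extendEnv (p.comps X) ρ) := by
      refine finCont_sem M fun n => ?_
      have : (fun X => extendEnv (p.comps X) ρ n) =
          fun X => (p.comps X).getD n (ρ (n - p.size)) := by
        funext X; rw [extendEnv, Pat.length_comps]
      rw [this]
      exact finCont_comps p FinCont.id n _
    ext d
    refine Iff.trans ?_ (hc (sem N ρ) d).symm
    constructor
    · rintro ⟨l, ⟨l', d', he, hd⟩, hl⟩
      cases he
      exact ⟨l, hl, hd⟩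
    · rintro ⟨l, hl, hd⟩
      exact ⟨l, ⟨l, d, rfl, hd⟩, hl⟩
  | bangRed | sectRed => intro ρ; rfl
  | appL _ ih | appR _ ih | lamC _ ih | tensL _ ih | tensR _ ih | bangC _ ih | unbangC _ ih
  | sectC _ ih | unsectC _ ih => intro ρ; simp only [sem, ih]

theorem sem_steps {M N : Tm} (h : Steps M N) (ρ : ℕ → Set Tok) : sem M ρ = sem N ρ := by
  induction h with
  | refl => rfl
  | tail _ h ih => rw [ih, sem_step h]

theorem sem_sectTm (k : ℕ) (M : Tm) (ρ : ℕ → Set Tok) : sem (sectTm k M) ρ = sem M ρ := by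
  induction k with
  | zero => rfl
  | succ k ih => simpa [sectTm, sem] using ih

/-- Finitely many tokens of the successor function on atoms. -/
def succToks (n : ℕ) : List Tok := (List.range n).map fun k => .arr [.atom k] (.atom (k + 1))

theorem mem_sem_church_self (n : ℕ) (ρ : ℕ → Set Tok) :
    Tok.arr (succToks n) (.arr [.atom 0] (.atom n)) ∈ sem (church n) ρ := by
  refine ⟨_, _, rfl, _, _, rfl, ?_⟩
  have key : ∀ k ≤ n, Tok.atom k ∈ sem (churchBody k)
      (extendEnv (Pat.pvar.comps {x | x ∈ [Tok.atom 0]})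
        (extendEnv (Pat.pvar.comps {x | x ∈ succToks n}) ρ)) := by
    intro k
    induction k with
    | zero => intro _; simp [churchBody, sem, extendEnv, Pat.comps]
    | succ k ih =>
      intro hk
      refine ⟨[.atom k], ?_, by simpa using ih (by omega)⟩
      have : Tok.arr [.atom k] (.atom (k + 1)) ∈ succToks n :=
        List.mem_map.2 ⟨k, List.mem_range.2 (by omega), rfl⟩
      simpa [sem, extendEnv, Pat.comps] using this
  exact key n le_rfl

theorem eq_of_mem_sem_church {n m : ℕ} {ρ : ℕ → Set Tok}
    (h : Tok.arr (succToks n) (.arr [.atom 0] (.atom n)) ∈ sem (church m) ρ) : n = m := by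
  obtain ⟨l, d, he, l', d', he', hd⟩ := h
  cases he
  cases he'
  have key : ∀ (k : ℕ) (d : Tok), d ∈ sem (churchBody k)
      (extendEnv (Pat.pvar.comps {x | x ∈ [Tok.atom 0]})
        (extendEnv (Pat.pvar.comps {x | x ∈ succToks n}) ρ)) → d = .atom k := by
    intro k
    induction k with
    | zero => intro d hd; simpa [churchBody, sem, extendEnv, Pat.comps] using hd
    | succ k ih =>
      rintro d ⟨l, h1, h2⟩
      have h3 : Tok.arr l d ∈ succToks n := by simpa [sem, extendEnv, Pat.comps] using h1
      obtain ⟨j, -, hj⟩ := List.mem_map.1 h3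
      cases hj
      have := ih _ (h2 (.atom j) (by simp))
      cases this
      rfl
  have := key m _ hd
  cases this
  rfl

/-! ### Horner's scheme and the theorem -/

theorem foldl_horner (n θ : ℕ) : ∀ a : ℕ → ℕ,
    (((List.range θ).map a).reverse).foldl (fun r b => b + r * n) 0 =
      ∑ i ∈ Finset.range θ, a i * n ^ i := by
  induction θ with
  | zero => intro a; simp
  | succ θ ih =>
    intro a
    have := ih fun i => a (i + 1)
    rw [List.foldl_reverse] at this ⊢
    rw [List.range_succ_eq_map, List.map_cons, List.foldr_cons, List.map_map,
      Finset.sum_range_succ']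
    simp only [Function.comp_def, Nat.succ_eq_add_one]
    rw [this, Finset.sum_mul]
    simp [pow_succ, mul_assoc, Nat.add_comm]

/-- **Encoding the polynomials.**  For every polynomial `p(x) = Σ_{i=0}^{θ} a_i x^i`
with natural number coefficients and maximal non-null degree `θ` (i.e. `a_θ ≠ 0`),
there is a closed term `p̂` of the concrete syntax `Λ` such that
`⊢ p̂ : Int ⊸ §^{θ+3}Int`, and for all natural numbers `n` and `m`, `p(n) = m` if and
only if `p̂ n̄ ⇝* §^{θ+3} m̄`. -/
theorem polynomial_representation (θ : ℕ) (a : ℕ → ℕ) (hθ : a θ ≠ 0) :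
    ∃ phat : Tm, Typed [] phat (.limp IntF (sectFm (θ + 3) IntF)) ∧
      ∀ n m : ℕ,
        (∑ i ∈ Finset.range (θ + 1), a i * n ^ i) = m ↔
          Steps (.app phat (church n)) (sectTm (θ + 3) (church m)) := by
  set L : List ℕ := 0 :: ((List.range (θ + 1)).map a).reverse with hL
  have hlen : L.length + 1 = θ + 3 := by simp [hL]
  have hval (n : ℕ) : L.foldl (fun r b => b + r * n) 0 =
      ∑ i ∈ Finset.range (θ + 1), a i * n ^ i := by
    rw [hL, List.foldl_cons, zero_mul, zero_add, foldl_horner]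
  have hsteps (n : ℕ) := steps_poly L n
  refine ⟨polyTm L, ?_, fun n m => ⟨?_, fun h => ?_⟩⟩
  · rw [← hlen]; exact typed_poly L
  · rintro rfl
    rw [← hlen, ← hval]; exact hsteps n
  · have h1 := hsteps n
    rw [hlen, hval] at h1
    have h2 := (sem_steps h1 fun _ => ∅).symm.trans (sem_steps h fun _ => ∅)
    rw [sem_sectTm, sem_sectTm] at h2
    exact eq_of_mem_sem_church (h2 ▸ mem_sem_church_self _ _)
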